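/- arXiv:0706.1529 — 10 statements merged into one kernel-verified Lean document; each statement's English description precedes it below -/
import Mathlib

section
/- Let m ≥ 2 and let P = (X₁,…,X_m;≤) be an m-partite poset. Then dim(P) ≤ Σ_{1≤i<j≤m} dim(P_{i,j}). -/
/-!
A linear order `L` on a subset `S` that extends the induced order `r|_S` always extends to a
linear extension of the whole poset: adding `L` to `r` creates no cycle, because every passage
of `r` from `S` back to `S` is already contained in `L` (`exists_linear_extension_of_subset`).
Any two points of an `m`-partite poset lie in a common `X i ∪ X j` with `i < j` (here `2 ≤ m`
matters when both lie in the same part). So if `¬ r x y`, some member of a realizer of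
`P_{i,j}` violates `x ≤ y`, and so does its extension. Hence the extensions of all members of
minimal realizers of all `P_{i,j}` together realize `r`.

Since the dimension is an infimum in `ℕ`, minimal realizers are available only once some
realizer is known to exist; `exists_realizes` supplies this for finite posets.
-/

/-- A family of linear orders `L` realizes the relation `r` if each member is a linear
order and `r x y` holds iff `x` is below `y` in every member of the family. -/
def Realizes {α : Type*} {ι : Type*} (r : α → α → Prop) (L : ι → α → α → Prop) : Prop :=
  (∀ i, IsLinearOrder α (L i)) ∧ ∀ x y, r x y ↔ ∀ i, L i x y

/-- The order dimension of a relation `r`: the least `d` admitting a realizer of size `d`. -/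
noncomputable def relDim {α : Type*} (r : α → α → Prop) : ℕ :=
  sInf {d : ℕ | ∃ L : Fin d → α → α → Prop, Realizes r L}

/-- The order dimension of the subposet induced on the subset `S`. -/
noncomputable def subDim {α : Type*} (r : α → α → Prop) (S : Set α) : ℕ :=
  relDim (fun a b : S => r (a : α) (b : α))

/-- `(X₁,…,X_m; r)` is an `m`-partite poset: the `Xᵢ` are nonempty, pairwise disjoint,
cover everything, each `Xᵢ` is an antichain, and `x < y` forces `x ∈ Xᵢ`, `y ∈ X_j`
with `i < j`. -/
structure IsMPartite {α : Type*} (r : α → α → Prop) (m : ℕ) (X : Fin m → Set α) : Prop where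
  nonempty : ∀ i, (X i).Nonempty
  disjoint : ∀ i j, i ≠ j → Disjoint (X i) (X j)
  cover : ∀ a, ∃ i, a ∈ X i
  antichain : ∀ i, ∀ x ∈ X i, ∀ y ∈ X i, r x y → x = y
  strict : ∀ x y, r x y → x ≠ y → ∃ i j, i < j ∧ x ∈ X i ∧ y ∈ X j

/-- `B(P)`: the maximum of the dimensions of the bipartite subposets `P_{i,j}`, `i < j`. -/
noncomputable def BP {α : Type*} (r : α → α → Prop) {m : ℕ} (X : Fin m → Set α) : ℕ :=
  Finset.sup (Finset.univ.filter fun p : Fin m × Fin m => p.1 < p.2)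
    (fun p => subDim r (X p.1 ∪ X p.2))

/-- A linear order on `S` extending the order induced by `r` extends to a linear extension of
`r`, with which it agrees on `S`. -/
lemma exists_linear_extension_of_subset {α : Type*} (r : α → α → Prop)
    (hr : IsPartialOrder α r) (S : Set α) (L : S → S → Prop) (hL : IsLinearOrder S L)
    (hrL : ∀ a b : S, r a b → L a b) :
    ∃ M : α → α → Prop, IsLinearOrder α M ∧ (∀ a b, r a b → M a b) ∧
      ∀ a b : S, M a b → L a b := by
  have rrefl : ∀ a, r a a := hr.refl
  have rtrans : ∀ a b c, r a b → r b c → r a c := hr.trans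
  have rantisymm : ∀ a b, r a b → r b a → a = b := hr.antisymm
  have Lrefl : ∀ a, L a a := hL.refl
  have Ltrans : ∀ a b c, L a b → L b c → L a c := hL.trans
  have Lantisymm : ∀ a b, L a b → L b a → a = b := hL.antisymm
  have Ltotal : ∀ a b, L a b ∨ L b a := hL.total
  -- The transitive closure of `r ∪ L`: one excursion through `L` suffices.
  let r' : α → α → Prop := fun a b => r a b ∨ ∃ s t : S, r a s ∧ L s t ∧ r t b
  have hr' : IsPartialOrder α r' :=
    { refl := fun a => Or.inl (rrefl a)
      trans := by
        rintro a b c (h | ⟨s, t, h1, h2, h3⟩) (h' | ⟨s', t', h1', h2', h3'⟩)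
        · exact Or.inl (rtrans _ _ _ h h')
        · exact Or.inr ⟨s', t', rtrans _ _ _ h h1', h2', h3'⟩
        · exact Or.inr ⟨s, t, h1, h2, rtrans _ _ _ h3 h'⟩
        · exact Or.inr ⟨s, t', h1, Ltrans _ _ _ h2
            (Ltrans _ _ _ (hrL _ _ (rtrans _ _ _ h3 h1')) h2'), h3'⟩
      antisymm := by
        rintro a b (h | ⟨s, t, h1, h2, h3⟩) (h' | ⟨s', t', h1', h2', h3'⟩)
        · exact rantisymm _ _ h h'
        · obtain rfl := Lantisymm _ _ h2' (hrL _ _ (rtrans _ _ _ h3' (rtrans _ _ _ h h1')))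
          exact rantisymm _ _ h (rtrans _ _ _ h1' h3')
        · obtain rfl := Lantisymm _ _ h2 (hrL _ _ (rtrans _ _ _ h3 (rtrans _ _ _ h' h1)))
          exact rantisymm _ _ (rtrans _ _ _ h1 h3) h'
        · have e1 := hrL _ _ (rtrans _ _ _ h3 h1')
          have e2 := hrL _ _ (rtrans _ _ _ h3' h1)
          obtain rfl := Lantisymm _ _ h2 (Ltrans _ _ _ e1 (Ltrans _ _ _ h2' e2))
          obtain rfl := Lantisymm _ _ h2' (Ltrans _ _ _ e2 e1)
          -- Both excursions through `L` are now trivial, so the cycle lies in `r`.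
          exact rantisymm _ _ (rtrans _ _ _ h1 h3) (rtrans _ _ _ h1' h3') }
  obtain ⟨M, hM, hrM⟩ := extend_partialOrder r'
  refine ⟨M, hM, fun a b h => hrM _ _ (Or.inl h), fun a b h => ?_⟩
  rcases Ltotal a b with hab | hba
  · exact hab
  · have : M b a := hrM _ _ (Or.inr ⟨b, a, rrefl _, hba, rrefl _⟩)
    rw [Subtype.ext (hM.antisymm _ _ h this)]
    exact Lrefl b

/-- If `x ≤ y` fails, the order can be linearly extended so as to still violate `x ≤ y`:
first add the relation `y ≤ x`, then extend. -/
lemma exists_linear_extension_not {α : Type*} (r : α → α → Prop)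
    (hr : IsPartialOrder α r) (x y : α) (hxy : ¬ r x y) :
    ∃ M : α → α → Prop, IsLinearOrder α M ∧ (∀ a b, r a b → M a b) ∧ ¬ M x y := by
  have rrefl : ∀ a, r a a := hr.refl
  have rtrans : ∀ a b c, r a b → r b c → r a c := hr.trans
  have rantisymm : ∀ a b, r a b → r b a → a = b := hr.antisymm
  let r' : α → α → Prop := fun a b => r a b ∨ (r a y ∧ r x b)
  have hr' : IsPartialOrder α r' :=
    { refl := fun a => Or.inl (rrefl a)
      trans := by intro a b c; simp only [r']; grind
      antisymm := by intro a b; simp only [r']; grind }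
  obtain ⟨M, hM, hrM⟩ := extend_partialOrder r'
  refine ⟨M, hM, fun a b h => hrM _ _ (Or.inl h), fun h => hxy ?_⟩
  have : M y x := hrM _ _ (Or.inr ⟨rrefl _, rrefl _⟩)
  rw [hM.antisymm _ _ h this]
  exact rrefl y

lemma exists_fin_realizes {α ι : Type*} [Fintype ι] (r : α → α → Prop)
    (L : ι → α → α → Prop) (hL : Realizes r L) :
    ∃ L' : Fin (Fintype.card ι) → α → α → Prop, Realizes r L' := by
  let e := Fintype.equivFin ι
  refine ⟨fun k => L (e.symm k), fun k => hL.1 _, fun x y => ?_⟩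
  rw [hL.2 x y]
  exact e.symm.forall_congr_right.symm

/-- A finite poset has a realizer: one linear extension for each pair violating `r`. -/
lemma exists_realizes {α : Type*} [Finite α] (r : α → α → Prop)
    (hr : IsPartialOrder α r) : ∃ d, ∃ L : Fin d → α → α → Prop, Realizes r L := by
  have := Fintype.ofFinite {p : α × α // ¬ r p.1 p.2}
  choose M hM hrM hn using fun p : {p : α × α // ¬ r p.1 p.2} =>
    exists_linear_extension_not r hr p.1.1 p.1.2 p.2
  refine ⟨_, exists_fin_realizes r M ⟨hM, fun x y => ⟨fun h p => hrM p _ _ h, fun h => ?_⟩⟩⟩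
  by_contra hxy
  exact hn ⟨(x, y), hxy⟩ (h _)

/-- A minimal realizer of the subposet induced on `S`. -/
lemma exists_realizes_subDim {α : Type*} [Finite α] (r : α → α → Prop)
    (hr : IsPartialOrder α r) (S : Set α) :
    ∃ L : Fin (subDim r S) → S → S → Prop, Realizes (fun a b : S => r (a : α) (b : α)) L :=
  Nat.sInf_mem (exists_realizes (fun a b : S => r (a : α) (b : α))
    { refl := fun _ => hr.refl _
      trans := fun _ _ _ h h' => hr.trans _ _ _ h h'
      antisymm := fun _ _ h h' => Subtype.ext (hr.antisymm _ _ h h') })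

/-- Any two points of an `m`-partite poset lie in a common `X i ∪ X j` with `i < j`. -/
lemma exists_lt_mem_union {α : Type*} {r : α → α → Prop} {m : ℕ} (hm : 2 ≤ m)
    {X : Fin m → Set α} (hX : IsMPartite r m X) (x y : α) :
    ∃ i j, i < j ∧ x ∈ X i ∪ X j ∧ y ∈ X i ∪ X j := by
  obtain ⟨i, hi⟩ := hX.cover x
  obtain ⟨j, hj⟩ := hX.cover y
  rcases lt_trichotomy i j with h | rfl | h
  · exact ⟨i, j, h, Or.inl hi, Or.inr hj⟩
  · have : Nontrivial (Fin m) := Fin.nontrivial_iff_two_le.2 hm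
    obtain ⟨k, hk⟩ := exists_ne i
    rcases lt_or_gt_of_ne hk with h | h
    · exact ⟨k, i, h, Or.inr hi, Or.inr hj⟩
    · exact ⟨i, k, h, Or.inl hi, Or.inl hj⟩
  · exact ⟨j, i, h, Or.inr hi, Or.inl hj⟩

/-- The dimension of an `m`-partite poset is at most the sum of the dimensions of its
bipartite subposets `P_{i,j}` over all pairs `i < j`. -/
theorem dim_le_sum_bipartite {α : Type*} [Fintype α] (r : α → α → Prop)
    (hr : IsPartialOrder α r) {m : ℕ} (hm : 2 ≤ m) (X : Fin m → Set α)
    (hX : IsMPartite r m X) :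
    relDim r ≤ ∑ p ∈ Finset.univ.filter (fun p : Fin m × Fin m => p.1 < p.2),
      subDim r (X p.1 ∪ X p.2) := by
  let T := Finset.univ.filter (fun p : Fin m × Fin m => p.1 < p.2)
  choose L hL using fun p : Fin m × Fin m => exists_realizes_subDim r hr (X p.1 ∪ X p.2)
  choose M hM hrM hML using fun (p : Fin m × Fin m) (k : Fin (subDim r (X p.1 ∪ X p.2))) =>
    exists_linear_extension_of_subset r hr (X p.1 ∪ X p.2) (L p k) ((hL p).1 k)
      (fun a b h => ((hL p).2 a b).1 h k)
  have key : Realizes r (fun q : (Σ p : T, Fin (subDim r (X p.1.1 ∪ X p.1.2))) =>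
      M q.1 q.2) := by
    refine ⟨fun q => hM _ _, fun x y => ⟨fun h q => hrM _ _ _ _ h, fun h => ?_⟩⟩
    obtain ⟨i, j, hij, hx, hy⟩ := exists_lt_mem_union hm hX x y
    have hT : (i, j) ∈ T := by simp [T, hij]
    exact ((hL (i, j)).2 ⟨x, hx⟩ ⟨y, hy⟩).2 fun k =>
      hML (i, j) k ⟨x, hx⟩ ⟨y, hy⟩ (h ⟨⟨(i, j), hT⟩, k⟩)
  have hle : relDim r ≤ _ := Nat.sInf_le (exists_fin_realizes r _ key)
  refine hle.trans_eq ?_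
  simp only [Fintype.card_sigma, Fintype.card_fin]
  exact Finset.sum_coe_sort T (fun p => subDim r (X p.1 ∪ X p.2))
end

section
/- Let g,h,k be natural numbers with h,k ≥ 2 and 1 ≤ g ≤ min{h,k}, and let M ⊆ [h]×[k] be a matching of size g. Then the order dimension of the poset C_{-g}(h,k) equals max{2,g}. -/
/-- `M` is a matching: its pairs have pairwise distinct first coordinates and pairwise
distinct second coordinates. -/
def IsMatching {h k : ℕ} (M : Finset (Fin h × Fin k)) : Prop :=
  ∀ p ∈ M, ∀ q ∈ M, (p.1 = q.1 ∨ p.2 = q.2) → p = q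

/-- The order of the poset `C_{-g}(h,k)`: on `X = {x₁,…,x_h}` (the left summands) and
`Y = {y₁,…,y_k}` (the right summands), the only strict relations are `xᵢ < y_j` for
`(i,j) ∉ M`. -/
def Cle {h k : ℕ} (M : Finset (Fin h × Fin k)) :
    (Fin h ⊕ Fin k) → (Fin h ⊕ Fin k) → Prop
  | Sum.inl i, Sum.inl i' => i = i'
  | Sum.inl i, Sum.inr j => (i, j) ∉ M
  | Sum.inr _, Sum.inl _ => False
  | Sum.inr j, Sum.inr j' => j = j'

theorem two_le_of_realizes {h k d : ℕ} (hh : 2 ≤ h) {M : Finset (Fin h × Fin k)} {L : Fin d → (Fin h ⊕ Fin k) → (Fin h ⊕ Fin k) → Prop}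
    (hL : Realizes (Cle M) L) : 2 ≤ d := by
  obtain ⟨hlin, hr⟩ := hL
  by_contra! hd
  have hx : ∀ i i' : Fin h, i ≠ i' → ∃ t, ¬ L t (Sum.inl i) (Sum.inl i') := by
    intro i i' hne
    have := (hr (Sum.inl i) (Sum.inl i')).not.1 (by simpa [Cle] using hne)
    simpa using this
  obtain ⟨t, ht⟩ := hx ⟨0, by omega⟩ ⟨1, by omega⟩ (by simp)
  obtain ⟨t', ht'⟩ := hx ⟨1, by omega⟩ ⟨0, by omega⟩ (by simp)
  have htt : t = t' := by ext; omega
  subst htt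
  have := hlin t
  exact (total_of (L t) _ _).elim ht ht'

theorem card_le_of_realizes {h k d : ℕ} {M : Finset (Fin h × Fin k)} (hM : IsMatching M)
    {L : Fin d → (Fin h ⊕ Fin k) → (Fin h ⊕ Fin k) → Prop}
    (hL : Realizes (Cle M) L) : M.card ≤ d := by
  obtain ⟨hlin, hr⟩ := hL
  have hrev : ∀ p : M, ∃ t, ¬ L t (Sum.inl p.1.1) (Sum.inr p.1.2) := by
    intro p
    have := (hr (Sum.inl p.1.1) (Sum.inr p.1.2)).not.1 (by simp [Cle])
    simpa using this
  choose f hf using hrev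
  have hinj : Function.Injective f := by
    intro p q hpq
    by_contra hne
    have hne' : p.1 ≠ q.1 := fun h => hne (Subtype.ext h)
    have hq := hf q
    rw [← hpq] at hq
    have := hlin (f p)
    -- the cross relations `x_p < y_q` and `x_q < y_p` hold because `M` is a matching
    have h1 : L (f p) (Sum.inl p.1.1) (Sum.inr q.1.2) := by
      refine (hr (Sum.inl _) (Sum.inr _)).1 (show _ ∉ M from fun hmem => hne' ?_) _
      have e := hM _ p.2 _ hmem (Or.inl rfl)
      exact hM _ p.2 _ q.2 (Or.inr (congrArg Prod.snd e :))
    have h2 : L (f p) (Sum.inl q.1.1) (Sum.inr p.1.2) := by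
      refine (hr (Sum.inl _) (Sum.inr _)).1 (show _ ∉ M from fun hmem => hne' ?_) _
      have e := hM _ p.2 _ hmem (Or.inr rfl)
      exact hM _ p.2 _ q.2 (Or.inl (congrArg Prod.fst e :))
    have h3 : L (f p) (Sum.inr q.1.2) (Sum.inl q.1.1) := (total_of (L (f p)) _ _).resolve_left hq
    exact hf p (trans_of (L (f p)) h1 (trans_of (L (f p)) h3 h2))
  simpa using Fintype.card_le_of_injective f hinj

open Classical in
/-- Sorting key on `Fin n` that moves the vertices satisfying only `P` to the top and those
satisfying only `Q` to the bottom. -/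
noncomputable def sortKey {n : ℕ} (P Q : Fin n → Prop) (i : Fin n) : ℤ :=
  i + (if P i then 2 * (n : ℤ) else 0) - (if Q i then 2 * (n : ℤ) else 0)

theorem sortKey_bounds {n : ℕ} (P Q : Fin n → Prop) (i : Fin n) :
    -(2 * (n : ℤ)) ≤ sortKey P Q i ∧ sortKey P Q i < 3 * (n : ℤ) := by
  have := i.2
  unfold sortKey
  split_ifs <;> omega

theorem sortKey_injective {n : ℕ} {P Q : Fin n → Prop} (hP : ∀ i i', P i → P i' → i = i')
    (hQ : ∀ i i', Q i → Q i' → i = i') : Function.Injective (sortKey P Q) := by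
  intro i i' heq
  have := i.2
  have := i'.2
  unfold sortKey at heq
  split_ifs at heq <;>
    first
    | exact hP _ _ (by assumption) (by assumption)
    | exact hQ _ _ (by assumption) (by assumption)
    | (ext; omega)

theorem sortKey_le_of_mem {n : ℕ} {P Q : Fin n → Prop} (hP : ∀ i i', P i → P i' → i = i')
    (hPQ : ∀ i, P i → ¬ Q i) {i i' : Fin n} (hi : P i) : sortKey P Q i' ≤ sortKey P Q i := by
  have := i.2
  have := i'.2
  by_cases h' : P i'
  · rw [hP i i' hi h']
  · simp only [sortKey, hi, h', hPQ i hi, if_true, if_false]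
    split_ifs <;> omega

theorem sortKey_ge_of_mem {n : ℕ} {P Q : Fin n → Prop} (hQ : ∀ i i', Q i → Q i' → i = i')
    (hPQ : ∀ i, P i → ¬ Q i) {i i' : Fin n} (hi : Q i) : sortKey P Q i ≤ sortKey P Q i' := by
  have := i.2
  have := i'.2
  by_cases h' : Q i'
  · rw [hQ i i' hi h']
  · have : ¬ P i := fun h => hPQ i h hi
    simp only [sortKey, hi, h', this, if_true, if_false]
    split_ifs <;> omega

open Classical in
/-- The position of a vertex in the `t`-th linear order. Here `A t i` and `B t j` say that `i`,
respectively `j`, is the endpoint `a_t`, respectively `b_t`, of the `t`-th matching pair. The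
multiple of `10 * (h + k)` selects the block; the `sortKey`, too small to change the block,
sorts inside the blocks, in opposite directions for `t = 0` and `t ≠ 0`. -/
noncomputable def cKey {h k : ℕ} (A : ℕ → Fin h → Prop) (B : ℕ → Fin k → Prop) (t : ℕ) :
    Fin h ⊕ Fin k → ℤ
  | Sum.inl i => (if A t i then 20 * (h + k : ℤ) else 0) +
      (if t = 0 then sortKey (A 0) (A 1) i else -sortKey (A 0) (A 1) i)
  | Sum.inr j => (if B t j then 10 * (h + k : ℤ) else 30 * (h + k : ℤ)) +
      (if t = 0 then sortKey (B 1) (B 0) j else -sortKey (B 1) (B 0) j)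

theorem isLinearOrder_of_key {α : Type*} (f : α → ℤ) (hf : Function.Injective f) :
    IsLinearOrder α (fun x y => f x ≤ f y) where
  refl _ := le_rfl
  trans _ _ _ := le_trans
  antisymm _ _ h h' := hf (le_antisymm h h')
  total _ _ := le_total _ _

section Key

variable {h k : ℕ} {A : ℕ → Fin h → Prop} {B : ℕ → Fin k → Prop}

theorem cKey_inl_le_inr_iff (t : ℕ) (i : Fin h) (j : Fin k) :
    cKey A B t (Sum.inl i) ≤ cKey A B t (Sum.inr j) ↔ ¬ (A t i ∧ B t j) := by
  have := sortKey_bounds (A 0) (A 1) i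
  have := sortKey_bounds (B 1) (B 0) j
  have := i.2
  by_cases h1 : A t i <;> by_cases h2 : B t j <;> simp [cKey, h1, h2] <;>
    split_ifs <;> omega

theorem cKey_inr_le_inl_iff (t : ℕ) (i : Fin h) (j : Fin k) :
    cKey A B t (Sum.inr j) ≤ cKey A B t (Sum.inl i) ↔ (A t i ∧ B t j) := by
  have := sortKey_bounds (A 0) (A 1) i
  have := sortKey_bounds (B 1) (B 0) j
  have := i.2
  by_cases h1 : A t i <;> by_cases h2 : B t j <;> simp [cKey, h1, h2] <;>
    split_ifs <;> omega

theorem cKey_injective (hA : ∀ t i i', A t i → A t i' → i = i')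
    (hB : ∀ t j j', B t j → B t j' → j = j') (t : ℕ) : Function.Injective (cKey A B t) := by
  rintro (i | j) (i' | j') heq
  · have b := sortKey_bounds (A 0) (A 1) i
    have b' := sortKey_bounds (A 0) (A 1) i'
    have := i.2
    simp only [cKey] at heq
    -- equal keys lie in the same block
    have e : sortKey (A 0) (A 1) i = sortKey (A 0) (A 1) i' := by
      split_ifs at heq <;> omega
    rw [sortKey_injective (hA 0) (hA 1) e]
  · exact absurd ((cKey_inr_le_inl_iff t i j').1 heq.ge) ((cKey_inl_le_inr_iff t i j').1 heq.le)
  · exact absurd ((cKey_inr_le_inl_iff t i' j).1 heq.le) ((cKey_inl_le_inr_iff t i' j).1 heq.ge)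
  · have b := sortKey_bounds (B 1) (B 0) j
    have b' := sortKey_bounds (B 1) (B 0) j'
    have := j.2
    simp only [cKey] at heq
    -- equal keys lie in the same block
    have e : sortKey (B 1) (B 0) j = sortKey (B 1) (B 0) j' := by
      split_ifs at heq <;> omega
    rw [sortKey_injective (hB 1) (hB 0) e]

/-- Orders `0` and `1` are opposite on `X`: as `a₀` has the largest `sortKey` and `a₁` the
smallest, moving them to the upper block of `X` does not disturb the sorting. -/
theorem inl_antichain (hA : ∀ t i i', A t i → A t i' → i = i') (hA01 : ∀ i, A 0 i → ¬ A 1 i)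
    (i i' : Fin h) (h0 : cKey A B 0 (Sum.inl i) ≤ cKey A B 0 (Sum.inl i'))
    (h1 : cKey A B 1 (Sum.inl i) ≤ cKey A B 1 (Sum.inl i')) : i = i' := by
  have b := sortKey_bounds (A 0) (A 1) i
  have b' := sortKey_bounds (A 0) (A 1) i'
  have := i.2
  have d : ∀ l, A 0 l → ¬ A 1 l := hA01
  simp only [cKey, if_true, one_ne_zero, if_false] at h0 h1
  refine sortKey_injective (hA 0) (hA 1) (le_antisymm ?_ ?_)
  · by_cases c : A 0 i'
    · exact sortKey_le_of_mem (hA 0) d c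
    · simp only [c, if_false] at h0
      split_ifs at h0 <;> omega
  · by_cases c : A 1 i'
    · exact sortKey_ge_of_mem (hA 1) d c
    · simp only [c, if_false] at h1
      split_ifs at h1 <;> omega

/-- Orders `0` and `1` are opposite on `Y`: as `b₀` has the smallest `sortKey` and `b₁` the
largest, moving them to the lower block of `Y` does not disturb the sorting. -/
theorem inr_antichain (hB : ∀ t j j', B t j → B t j' → j = j') (hB01 : ∀ j, B 0 j → ¬ B 1 j)
    (j j' : Fin k) (h0 : cKey A B 0 (Sum.inr j) ≤ cKey A B 0 (Sum.inr j'))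
    (h1 : cKey A B 1 (Sum.inr j) ≤ cKey A B 1 (Sum.inr j')) : j = j' := by
  have b := sortKey_bounds (B 1) (B 0) j
  have b' := sortKey_bounds (B 1) (B 0) j'
  have := j.2
  have d : ∀ l, B 1 l → ¬ B 0 l := fun l hl hl0 => hB01 l hl0 hl
  simp only [cKey, if_true, one_ne_zero, if_false] at h0 h1
  refine sortKey_injective (hB 1) (hB 0) (le_antisymm ?_ ?_)
  · by_cases c : B 0 j
    · exact sortKey_ge_of_mem (hB 0) d c
    · simp only [c, if_false] at h0
      split_ifs at h0 <;> omega
  · by_cases c : B 1 j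
    · exact sortKey_le_of_mem (hB 1) d c
    · simp only [c, if_false] at h1
      split_ifs at h1 <;> omega

end Key

theorem exists_realizer {h k : ℕ} {M : Finset (Fin h × Fin k)} (hM : IsMatching M) :
    ∃ L : Fin (max 2 M.card) → (Fin h ⊕ Fin k) → (Fin h ⊕ Fin k) → Prop,
      Realizes (Cle M) L := by
  let e : M ≃ Fin M.card := M.equivFin
  have he : ∀ m m' : M, (e m : ℕ) = e m' → m = m' := fun m m' hm => e.injective (Fin.ext hm)
  let A : ℕ → Fin h → Prop := fun t i => ∃ m : M, (e m : ℕ) = t ∧ m.1.1 = i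
  let B : ℕ → Fin k → Prop := fun t j => ∃ m : M, (e m : ℕ) = t ∧ m.1.2 = j
  have hA : ∀ t i i', A t i → A t i' → i = i' := by
    rintro _ _ _ ⟨m, rfl, rfl⟩ ⟨m', hm, rfl⟩
    rw [he _ _ hm]
  have hB : ∀ t j j', B t j → B t j' → j = j' := by
    rintro _ _ _ ⟨m, rfl, rfl⟩ ⟨m', hm, rfl⟩
    rw [he _ _ hm]
  have hA01 : ∀ i, A 0 i → ¬ A 1 i := by
    rintro _ ⟨m, hm, rfl⟩ ⟨m', hm', hi⟩
    have : m = m' := Subtype.ext (hM _ m.2 _ m'.2 (Or.inl hi.symm))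
    subst this
    omega
  have hB01 : ∀ j, B 0 j → ¬ B 1 j := by
    rintro _ ⟨m, hm, rfl⟩ ⟨m', hm', hj⟩
    have : m = m' := Subtype.ext (hM _ m.2 _ m'.2 (Or.inr hj.symm))
    subst this
    omega
  have hAB : ∀ t i j, A t i → B t j → (i, j) ∈ M := by
    rintro _ _ _ ⟨m, rfl, rfl⟩ ⟨m', hm, rfl⟩
    rw [he _ _ hm]
    exact m.2
  let t0 : Fin (max 2 M.card) := ⟨0, by simp⟩
  let t1 : Fin (max 2 M.card) := ⟨1, by simp⟩
  refine ⟨fun t x y => cKey A B t x ≤ cKey A B t y,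
    fun t => isLinearOrder_of_key _ (cKey_injective hA hB t), ?_⟩
  rintro (i | j) (i' | j')
  · exact ⟨fun hi => by cases hi; exact fun _ => le_rfl,
      fun hi => inl_antichain hA hA01 i i' (hi t0) (hi t1)⟩
  · simp only [cKey_inl_le_inr_iff, Cle]
    constructor
    · exact fun hn t ht => hn (hAB t _ _ ht.1 ht.2)
    · intro ht hmem
      exact ht ⟨e ⟨_, hmem⟩, lt_max_of_lt_right (e ⟨_, hmem⟩).2⟩ ⟨⟨_, rfl, rfl⟩, ⟨_, rfl, rfl⟩⟩
  · simp only [cKey_inr_le_inl_iff, Cle, false_iff]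
    exact fun ht => hA01 _ (ht t0).1 (ht t1).1
  · exact ⟨fun hj => by cases hj; exact fun _ => le_rfl,
      fun hj => inr_antichain hB hB01 j j' (hj t0) (hj t1)⟩

/-- For `h,k ≥ 2`, `1 ≤ g ≤ min{h,k}` and a matching `M` of size `g`,
the order dimension of `C_{-g}(h,k)` equals `max 2 g`. -/
theorem dim_C_eq_max {g h k : ℕ} (hh : 2 ≤ h) (hk : 2 ≤ k) (hg1 : 1 ≤ g)
    (hgh : g ≤ h) (hgk : g ≤ k) (M : Finset (Fin h × Fin k))
    (hM : IsMatching M) (hcard : M.card = g) :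
    relDim (Cle M) = max 2 g := by
  subst hcard
  refine le_antisymm (Nat.sInf_le (exists_realizer hM)) ?_
  refine le_csInf ⟨_, exists_realizer hM⟩ ?_
  rintro d ⟨L, hL⟩
  exact max_le (two_le_of_realizes hh hL) (card_le_of_realizes hM hL)
end

section
/- Let g,h,k be natural numbers with h,k ≥ 2 and 2 ≤ g ≤ min{h,k}, and let M ⊆ [h]×[k] be a matching of size g. Then there exist g linear orders on {x₁,…,x_h} ∪ {y₁,…,y_k}, each extending the partial order of C_{-g}(h,k), that realize C_{-g}(h,k); in particular dim(C_{-g}(h,k)) ≤ g. -/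
/-- The position of the block of an element in the stack of blocks of the `t`-th order, for a
matching enumerated as `(a t, b t)`. -/
noncomputable def blockLevel {g h k : ℕ} (a : Fin g → Fin h) (b : Fin g → Fin k) (t : Fin g) :
    (Fin h ⊕ Fin k) → ℕ :=
  open Classical in
  fun u => match u with
  | Sum.inl i => if i = a t then 3 else if ∃ s, a s = i then 0 else 1
  | Sum.inr j => if j = b t then 2 else if ∃ s, b s = j then 5 else 4

/-- The index of an element within `X` or `Y`, negated unless `t = 0`, so that comparing these
numbers sorts increasingly for `t = 0` and decreasingly otherwise. -/
def signedIndex {g h k : ℕ} (t : Fin g) : (Fin h ⊕ Fin k) → ℤ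
  | Sum.inl i => if t.val = 0 then (i.val : ℤ) else -(i.val : ℤ)
  | Sum.inr j => if t.val = 0 then (j.val : ℤ) else -(j.val : ℤ)

/-- The `t`-th linear order: lexicographic by block, then by signed index. -/
def blockOrder {g h k : ℕ} (a : Fin g → Fin h) (b : Fin g → Fin k) (t : Fin g)
    (u v : Fin h ⊕ Fin k) : Prop :=
  blockLevel a b t u < blockLevel a b t v ∨
    (blockLevel a b t u = blockLevel a b t v ∧ signedIndex t u ≤ signedIndex t v)

/-- Elements of `X` have levels `0, 1, 3` and elements of `Y` levels `2, 4, 5`, so equal levels put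
both elements on the same side, where the signed index determines them. -/
lemma eq_of_level_of_index {g h k : ℕ} (a : Fin g → Fin h) (b : Fin g → Fin k) (t : Fin g)
    (u v : Fin h ⊕ Fin k) (hl : blockLevel a b t u = blockLevel a b t v)
    (hi : signedIndex t u = signedIndex t v) : u = v := by
  rcases u with i | j <;> rcases v with i' | j'
  · simp only [signedIndex] at hi
    congr 1
    apply Fin.ext
    split_ifs at hi <;> omega
  · simp only [blockLevel] at hl
    split_ifs at hl <;> omega
  · simp only [blockLevel] at hl
    split_ifs at hl <;> omega
  · simp only [signedIndex] at hi
    congr 1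
    apply Fin.ext
    split_ifs at hi <;> omega

lemma blockOrder_isLinearOrder {g h k : ℕ} (a : Fin g → Fin h) (b : Fin g → Fin k)
    (t : Fin g) : IsLinearOrder (Fin h ⊕ Fin k) (blockOrder a b t) where
  refl u := by simp [blockOrder]
  trans u v w h1 h2 := by
    unfold blockOrder at *
    omega
  antisymm u v h1 h2 := by
    unfold blockOrder at *
    exact eq_of_level_of_index a b t u v (by omega) (by omega)
  total u v := by
    unfold blockOrder
    omega

lemma blockOrder_realizes {g h k : ℕ} (hg2 : 2 ≤ g) (M : Finset (Fin h × Fin k))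
    (a : Fin g → Fin h) (b : Fin g → Fin k) (ha : Function.Injective a)
    (hb : Function.Injective b) (hM : ∀ i j, (i, j) ∈ M ↔ ∃ t, a t = i ∧ b t = j) :
    Realizes (Cle M) (blockOrder a b) := by
  have other : ∀ s : Fin g, ∃ t, t ≠ s := by
    have : Nontrivial (Fin g) := Fin.nontrivial_iff_two_le.mpr hg2
    exact exists_ne
  refine ⟨blockOrder_isLinearOrder a b, ?_⟩
  rintro (i | j) (i' | j')
  · refine ⟨?_, fun H => ?_⟩
    · rintro rfl t
      exact (blockOrder_isLinearOrder a b t).refl _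
    · change i = i'
      by_cases hi : ∃ s, a s = i
      · obtain ⟨s, rfl⟩ := hi
        have := H s
        by_contra hne
        simp only [blockOrder, blockLevel, if_neg (Ne.symm hne), ↓reduceIte] at this
        split_ifs at this <;> simp at this
      · by_cases hi' : ∃ s, a s = i'
        · obtain ⟨s, rfl⟩ := hi'
          obtain ⟨t, hts⟩ := other s
          have := H t
          have h1 : i ≠ a t := fun h => hi ⟨t, h.symm⟩
          have h2 : a s ≠ a t := fun h => hts (ha h).symm
          simp [blockOrder, blockLevel, h1, h2, hi] at this
        -- Orders `0` and `1` compare two unmatched elements by opposite index orders.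
        · have h0 := H ⟨0, by omega⟩
          have h1 := H ⟨1, by omega⟩
          have n : ∀ t, i ≠ a t := fun t h => hi ⟨t, h.symm⟩
          have n' : ∀ t, i' ≠ a t := fun t h => hi' ⟨t, h.symm⟩
          simp [blockOrder, blockLevel, signedIndex, n, n', hi, hi'] at h0 h1
          exact le_antisymm h0 h1
  · refine ⟨fun H t => ?_, fun H => ?_⟩
    · change (i, j') ∉ M at H
      rw [hM] at H
      left
      simp only [blockLevel]
      by_cases h1 : i = a t
      · have h2 : j' ≠ b t := fun h => H ⟨t, h1.symm, h.symm⟩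
        rw [if_pos h1, if_neg h2]
        split_ifs <;> omega
      · rw [if_neg h1]
        split_ifs <;> omega
    · change (i, j') ∉ M
      rw [hM]
      rintro ⟨t, rfl, rfl⟩
      have := H t
      simp [blockOrder, blockLevel] at this
  · refine ⟨False.elim, fun H => ?_⟩
    -- In an order `t` with `a t ≠ i'` the element `x_{i'}` lies below all of `Y`.
    obtain ⟨t, ht⟩ : ∃ t, i' ≠ a t := by
      obtain ⟨t, hts⟩ := other ⟨0, by omega⟩
      by_contra! hall
      exact hts (ha ((hall t).symm.trans (hall _)))
    have := H t
    simp only [blockOrder, blockLevel, if_neg ht] at this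
    split_ifs at this <;> simp at this
  · refine ⟨?_, fun H => ?_⟩
    · rintro rfl t
      exact (blockOrder_isLinearOrder a b t).refl _
    · change j = j'
      by_cases hj' : ∃ s, b s = j'
      · obtain ⟨s, rfl⟩ := hj'
        have := H s
        by_contra hne
        simp only [blockOrder, blockLevel, if_neg hne, ↓reduceIte] at this
        split_ifs at this <;> simp at this
      · by_cases hj : ∃ s, b s = j
        · obtain ⟨s, rfl⟩ := hj
          obtain ⟨t, hts⟩ := other s
          have := H t
          have h1 : j' ≠ b t := fun h => hj' ⟨t, h.symm⟩
          have h2 : b s ≠ b t := fun h => hts (hb h).symm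
          simp [blockOrder, blockLevel, h1, h2, hj'] at this
        -- Orders `0` and `1` compare two unmatched elements by opposite index orders.
        · have h0 := H ⟨0, by omega⟩
          have h1 := H ⟨1, by omega⟩
          have n : ∀ t, j ≠ b t := fun t h => hj ⟨t, h.symm⟩
          have n' : ∀ t, j' ≠ b t := fun t h => hj' ⟨t, h.symm⟩
          simp [blockOrder, blockLevel, signedIndex, n, n', hj, hj'] at h0 h1
          exact le_antisymm h0 h1

/-- For `h,k ≥ 2`, `2 ≤ g ≤ min{h,k}` and a matching `M` of size `g`, there exist `g`
linear orders realizing `C_{-g}(h,k)`; in particular its order dimension is at most `g`. -/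
theorem C_realized_by_g_orders {g h k : ℕ} (hh : 2 ≤ h) (hk : 2 ≤ k) (hg2 : 2 ≤ g)
    (hgh : g ≤ h) (hgk : g ≤ k) (M : Finset (Fin h × Fin k))
    (hM : IsMatching M) (hcard : M.card = g) :
    (∃ L : Fin g → (Fin h ⊕ Fin k) → (Fin h ⊕ Fin k) → Prop, Realizes (Cle M) L) ∧
      relDim (Cle M) ≤ g := by
  have key : ∃ L : Fin g → (Fin h ⊕ Fin k) → (Fin h ⊕ Fin k) → Prop, Realizes (Cle M) L := by
    let e := (M.equivFinOfCardEq hcard).symm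
    refine ⟨_, blockOrder_realizes hg2 M (fun t => (e t).1.1) (fun t => (e t).1.2) ?_ ?_ ?_⟩
    · intro s t hst
      exact e.injective (Subtype.ext (hM _ (e s).2 _ (e t).2 (Or.inl hst)))
    · intro s t hst
      exact e.injective (Subtype.ext (hM _ (e s).2 _ (e t).2 (Or.inr hst)))
    · intro i j
      constructor
      · intro hij
        exact ⟨e.symm ⟨(i, j), hij⟩, by simp, by simp⟩
      · rintro ⟨t, rfl, rfl⟩
        exact (e t).2
  exact ⟨key, Nat.sInf_le key⟩
end

section
/- For every integer m ≥ 2 there exists an m-partite poset P = (X₁,…,X_m;≤) such that dim(P) ≥ ⌊m²/4⌋ · B(P). -/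
namespace StdEx

variable {T : Type}

/-- The standard example on `Bool × T`: `(false, t)` is `a_t` and `(true, t)` is `b_t`. -/
def rel (x y : Bool × T) : Prop :=
  x = y ∨ (x.1 = false ∧ y.1 = true ∧ x.2 ≠ y.2)

lemma rel_isPartialOrder : IsPartialOrder (Bool × T) rel where
  refl _ := Or.inl rfl
  trans x y z h1 h2 := by
    unfold rel at *
    grind
  antisymm x y h1 h2 := by
    unfold rel at *
    grind

open Classical in
/-- The level of an element in the linear extension
`a_{t₁}, (other a), b_{t₀}, a_{t₀}, (other b), b_{t₁}`. -/
noncomputable def lvl (t₀ t₁ : T) (x : Bool × T) : ℕ :=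
  if x.1 then (if x.2 = t₀ then 2 else if x.2 = t₁ then 5 else 4)
  else (if x.2 = t₁ then 0 else if x.2 = t₀ then 3 else 1)

/-- The linear extension with levels `lvl t₀ t₁`, ties being broken by `e`. -/
def linExt (t₀ t₁ : T) (e : T → ℤ) (x y : Bool × T) : Prop :=
  lvl t₀ t₁ x < lvl t₀ t₁ y ∨ (lvl t₀ t₁ x = lvl t₀ t₁ y ∧ e x.2 ≤ e y.2)

lemma linExt_isLinearOrder {t₀ t₁ : T} {e : T → ℤ} (he : Function.Injective e) :
    IsLinearOrder (Bool × T) (linExt t₀ t₁ e) where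
  refl x := Or.inr ⟨rfl, le_rfl⟩
  trans x y z h1 h2 := by
    unfold linExt at *
    omega
  antisymm x y h1 h2 := by
    -- Equal levels force the same side, because `a` and `b` elements share no level.
    have hl : lvl t₀ t₁ x = lvl t₀ t₁ y := by unfold linExt at *; omega
    have hx : x.2 = y.2 := he (by unfold linExt at *; omega)
    refine Prod.ext ?_ hx
    obtain ⟨x1, x2⟩ := x
    obtain ⟨y1, y2⟩ := y
    cases x1 <;> cases y1 <;> simp only [lvl] at hl <;> grind
  total x y := by
    unfold linExt
    omega

lemma linExt_of_rel {t₀ t₁ : T} (h : t₀ ≠ t₁) (e : T → ℤ) {x y : Bool × T} (hxy : rel x y) :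
    linExt t₀ t₁ e x y := by
  rcases hxy with rfl | ⟨h1, h2, h3⟩
  · exact Or.inr ⟨rfl, le_rfl⟩
  · left
    simp only [lvl, h1, h2]
    grind

/-- The two extensions with distinguished indices `t₀, t₁` (roles swapped and ties reversed in the
second) agree on `x, y` only when `rel` does, unless `{x, y} = {a_t, b_t}` for another index `t`. -/
lemma rel_of_linExt {t₀ t₁ : T} (h : t₀ ≠ t₁) {e : T → ℤ} (he : Function.Injective e)
    {x y : Bool × T} (hxy : x.2 = y.2 → x.1 ≠ y.1 → x.2 = t₀ ∨ x.2 = t₁)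
    (h1 : linExt t₀ t₁ e x y) (h2 : linExt t₁ t₀ (fun t => - e t) x y) : rel x y := by
  obtain ⟨x1, x2⟩ := x
  obtain ⟨y1, y2⟩ := y
  have := @he x2 y2
  cases x1 <;> cases y1 <;> simp only [linExt, lvl, rel] at * <;> grind

lemma exists_injective [Finite T] : ∃ e : T → ℤ, Function.Injective e := by
  obtain ⟨n, ⟨f⟩⟩ := Finite.exists_equiv_fin T
  exact ⟨fun t => ((f t : ℕ) : ℤ), fun a b h => by
    apply f.injective; apply Fin.ext; simpa using h⟩

lemma neg_injective' {e : T → ℤ} (he : Function.Injective e) :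
    Function.Injective (fun t => - e t) := fun _ _ h => he (neg_injective h)

lemma isLinearOrder_restrict {α : Type} {r : α → α → Prop} (h : IsLinearOrder α r) (S : Set α) :
    IsLinearOrder S (fun a b : S => r a b) where
  refl _ := h.refl _
  trans _ _ _ := h.trans _ _ _
  antisymm _ _ h1 h2 := Subtype.ext (h.antisymm _ _ h1 h2)
  total _ _ := h.total _ _

lemma subDim_le_two [Finite T] {t₀ t₁ : T} (h : t₀ ≠ t₁) (S : Set (Bool × T))
    (hS : ∀ t, (false, t) ∈ S → (true, t) ∈ S → t = t₀ ∨ t = t₁) : subDim rel S ≤ 2 := by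
  obtain ⟨e, he⟩ := exists_injective (T := T)
  refine Nat.sInf_le ⟨![fun a b => linExt t₀ t₁ e a b,
    fun a b => linExt t₁ t₀ (fun t => - e t) a b], ?_, ?_⟩
  · intro i
    fin_cases i
    · exact isLinearOrder_restrict (linExt_isLinearOrder he) S
    · exact isLinearOrder_restrict (linExt_isLinearOrder (neg_injective' he)) S
  · rintro ⟨x, hx⟩ ⟨y, hy⟩
    simp only [Fin.forall_fin_two, Matrix.cons_val_zero, Matrix.cons_val_one]
    refine ⟨fun hr => ⟨linExt_of_rel h _ hr, linExt_of_rel h.symm _ hr⟩, fun hr =>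
      rel_of_linExt h he ?_ hr.1 hr.2⟩
    intro h2 h1
    obtain ⟨x1, x2⟩ := x
    obtain ⟨y1, y2⟩ := y
    cases x1 <;> cases y1 <;> grind

/-- Needed because `sInf ∅ = 0`: a lower bound on the sizes of realizers bounds the dimension
only when some realizer exists. All the extensions `linExt` together form one. -/
lemma exists_realizer [Finite T] [Nontrivial T] :
    ∃ (d : ℕ) (L : Fin d → Bool × T → Bool × T → Prop), Realizes rel L := by
  obtain ⟨e, he⟩ := exists_injective (T := T)
  obtain ⟨d, ⟨f⟩⟩ := Finite.exists_equiv_fin ({p : T × T // p.1 ≠ p.2} × Bool)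
  let L : {p : T × T // p.1 ≠ p.2} × Bool → Bool × T → Bool × T → Prop := fun i =>
    linExt i.1.1.1 i.1.1.2 (if i.2 then e else fun t => - e t)
  refine ⟨d, fun k => L (f.symm k), fun k => ?_, fun x y => ⟨fun hr k => ?_, fun hr => ?_⟩⟩
  · apply linExt_isLinearOrder
    split_ifs
    exacts [he, neg_injective' he]
  · exact linExt_of_rel (f.symm k).1.2 _ hr
  · obtain ⟨t, ht⟩ := exists_ne x.2
    have h1 := hr (f (⟨(x.2, t), ht.symm⟩, true))
    have h2 := hr (f (⟨(t, x.2), ht⟩, false))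
    simp only [Equiv.symm_apply_apply, L] at h1 h2
    exact rel_of_linExt ht.symm he (fun _ _ => Or.inl rfl) (by simpa using h1) (by simpa using h2)

/-- Reversing both `(a_s, b_s)` and `(a_t, b_t)` in one linear extension gives the cycle
`a_s < b_t ≤ a_t < b_s ≤ a_s`. -/
lemma card_le [Fintype T] {d : ℕ} {L : Fin d → Bool × T → Bool × T → Prop}
    (hL : Realizes rel L) : Fintype.card T ≤ d := by
  have hex : ∀ t : T, ∃ i, ¬ L i (false, t) (true, t) := by
    intro t
    by_contra! hc
    have := (hL.2 _ _).2 hc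
    simp [rel] at this
  choose f hf using hex
  have hinj : Function.Injective f := by
    intro s t hst
    by_contra hne
    have hlin := hL.1 (f s)
    have h1 : L (f s) (false, s) (true, t) := (hL.2 _ _).1 (Or.inr ⟨rfl, rfl, hne⟩) _
    have h2 : L (f s) (false, t) (true, s) := (hL.2 _ _).1 (Or.inr ⟨rfl, rfl, Ne.symm hne⟩) _
    have h3 : L (f s) (true, t) (false, t) :=
      (hlin.total _ _).resolve_right (by rw [hst]; exact hf t)
    exact hf s (hlin.trans _ _ _ h1 (hlin.trans _ _ _ h3 h2))
  simpa using Fintype.card_le_of_injective f hinj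

lemma card_le_relDim [Fintype T] [Nontrivial T] :
    Fintype.card T ≤ relDim (rel : Bool × T → Bool × T → Prop) :=
  le_csInf exists_realizer fun _ ⟨_, hL⟩ => card_le hL

/-- The part containing an element: `i` for `a_(i,j,k)` and `p + j` for `b_(i,j,k)`. -/
def part {p q : ℕ} (x : Bool × (Fin p × Fin q × Bool)) : ℕ :=
  if x.1 then p + x.2.2.1 else x.2.1

end StdEx

open StdEx in
/-- For every `m ≥ 2` there is an `m`-partite poset `P` with
`dim(P) ≥ ⌊m²/4⌋ · B(P)`. -/
theorem exists_mpartite_dim_ge {m : ℕ} (hm : 2 ≤ m) :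
    ∃ (α : Type) (_ : Fintype α) (r : α → α → Prop) (_ : IsPartialOrder α r)
      (X : Fin m → Set α), IsMPartite r m X ∧
      (m ^ 2 / 4) * BP r X ≤ relDim r := by
  obtain ⟨p, q, hp, hq, rfl, hpq⟩ :
      ∃ p q : ℕ, 1 ≤ p ∧ 1 ≤ q ∧ m = p + q ∧ m ^ 2 / 4 = p * q := by
    obtain ⟨k, rfl | rfl⟩ := Nat.even_or_odd' m
    · refine ⟨k, k, by omega, by omega, by omega, ?_⟩
      rw [show (2 * k) ^ 2 = 4 * (k * k) by ring]
      omega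
    · refine ⟨k, k + 1, by omega, by omega, by omega, ?_⟩
      rw [show (2 * k + 1) ^ 2 = 4 * (k * (k + 1)) + 1 by ring]
      omega
  rw [hpq]
  let i₀ : Fin p := ⟨0, hp⟩
  let j₀ : Fin q := ⟨0, hq⟩
  have : Nontrivial (Fin p × Fin q × Bool) :=
    ⟨(i₀, j₀, false), (i₀, j₀, true), by simp⟩
  refine ⟨Bool × (Fin p × Fin q × Bool), inferInstance, rel, rel_isPartialOrder,
    fun i => {x | part x = i}, ⟨?_, ?_, ?_, ?_, ?_⟩, ?_⟩
  · intro i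
    by_cases hi : (i : ℕ) < p
    · exact ⟨(false, ⟨i, hi⟩, j₀, false), by simp [part]⟩
    · exact ⟨(true, i₀, ⟨i - p, by omega⟩, false), by simp [part]; omega⟩
  · intro i j hij
    rw [Set.disjoint_left]
    intro x hx hy
    exact hij (Fin.ext (hx.symm.trans hy))
  · rintro ⟨b, s, t, k⟩
    cases b
    · exact ⟨⟨s, by omega⟩, by simp [part]⟩
    · exact ⟨⟨p + t, by omega⟩, by simp [part]⟩
  · rintro i ⟨x1, x⟩ hx ⟨y1, y⟩ hy (h | ⟨h1, h2, -⟩)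
    · exact h
    · simp only at h1 h2
      subst h1 h2
      simp [part] at hx hy
      omega
  · rintro ⟨x1, x⟩ ⟨y1, y⟩ (h | ⟨h1, h2, -⟩) hne
    · exact absurd h hne
    · simp only at h1 h2
      subst h1 h2
      exact ⟨⟨x.1, by omega⟩, ⟨p + y.2.1, by omega⟩, Fin.lt_def.2 (by simp; omega),
        by simp [part], by simp [part]⟩
  · have hB : BP rel (fun i : Fin (p + q) =>
        {x : Bool × (Fin p × Fin q × Bool) | part x = i}) ≤ 2 := by
      refine Finset.sup_le ?_
      rintro ⟨i, j⟩ hij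
      have hij : (i : ℕ) < j := by simpa using hij
      -- When `i < p ≤ j` the two truncations are vacuous; otherwise no index `t` has both
      -- `a_t` and `b_t` in the two parts, and any values would do.
      let s : Fin p := ⟨min i (p - 1), by omega⟩
      let t : Fin q := ⟨min (j - p) (q - 1), by omega⟩
      refine subDim_le_two (t₀ := (s, t, false)) (t₁ := (s, t, true)) (by simp) _ ?_
      rintro ⟨u, v, k⟩ h1 h2
      simp [part] at h1 h2
      have hu : u = s := Fin.ext (by simp only [s]; omega)
      have hv : v = t := Fin.ext (by simp only [t]; omega)
      subst hu hv
      cases k <;> simp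
    refine le_trans (Nat.mul_le_mul_left _ hB) (le_trans (le_of_eq ?_) card_le_relDim)
    simp [mul_assoc]
end

section
/- For every n ≥ 2, in the poset P_n on A ∪ C ∪ B generated by the relations a_i < c_{ij} < b_j (for i ≠ j), the subposet induced on A ∪ C and the subposet induced on C ∪ B each have order dimension at most 2. -/
/-- Index set of the middle layer `C = {c_{ij} : i ≠ j}`. -/
abbrev CIdx (n : ℕ) := {p : Fin n × Fin n // p.1 ≠ p.2}

/-- The ground set `A ∪ C ∪ B` of the poset `P_n`. -/
abbrev PnElt (n : ℕ) := Fin n ⊕ (CIdx n ⊕ Fin n)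

/-- The order of `P_n`, generated by `a_i < c_{ij} < b_j` for `i ≠ j`: the strict
relations are exactly `a_i < c_{ij}`, `c_{ij} < b_j`, and `a_i < b_j` for `i ≠ j`. -/
def Pnle (n : ℕ) : PnElt n → PnElt n → Prop
  | Sum.inl i, Sum.inl i' => i = i'
  | Sum.inl i, Sum.inr (Sum.inl c) => c.1.1 = i
  | Sum.inl i, Sum.inr (Sum.inr j) => i ≠ j
  | Sum.inr (Sum.inl c), Sum.inr (Sum.inl c') => c = c'
  | Sum.inr (Sum.inl c), Sum.inr (Sum.inr j) => c.1.2 = j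
  | Sum.inr (Sum.inr j), Sum.inr (Sum.inr j') => j = j'
  | _, _ => False

/-- If `S` is partitioned into blocks by `p`, distinct blocks are incomparable, and each block is
realized by the pair of injective heights `q`, `q'`, then the dimension of `S` is at most two. -/
theorem subDim_le_two {α : Type*} (r : α → α → Prop) (S : Set α) (p q q' : α → ℤ)
    (hq : ∀ x ∈ S, ∀ y ∈ S, p x = p y → q x = q y → x = y)
    (hq' : ∀ x ∈ S, ∀ y ∈ S, p x = p y → q' x = q' y → x = y)
    (hr : ∀ x ∈ S, ∀ y ∈ S, r x y ↔ p x = p y ∧ q x ≤ q y ∧ q' x ≤ q' y) :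
    subDim r S ≤ 2 := by
  -- The blocks appear in opposite orders in the two linear orders.
  let f : S → ℤ ×ₗ ℤ := fun x => toLex (p x, q x)
  let g : S → ℤ ×ₗ ℤ := fun x => toLex (-p x, q' x)
  have hf : Function.Injective f := by
    intro x y h
    have h' : (p x, q x) = (p y, q y) := toLex.injective h
    rw [Prod.mk.injEq] at h'
    exact Subtype.ext (hq x x.2 y y.2 h'.1 h'.2)
  have hg : Function.Injective g := by
    intro x y h
    have h' : (-p x, q' x) = (-p y, q' y) := toLex.injective h
    rw [Prod.mk.injEq] at h'
    exact Subtype.ext (hq' x x.2 y y.2 (neg_injective h'.1) h'.2)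
  have key : ∀ h : S → ℤ ×ₗ ℤ, Function.Injective h →
      IsLinearOrder S (fun x y => h x ≤ h y) := fun h hh =>
    { refl := fun x => le_refl (h x)
      trans := fun x y z => le_trans
      antisymm := fun x y h1 h2 => hh (le_antisymm h1 h2)
      total := fun x y => le_total (h x) (h y) }
  refine Nat.sInf_le ⟨![fun x y => f x ≤ f y, fun x y => g x ≤ g y], ?_, ?_⟩
  · intro i
    fin_cases i
    · exact key f hf
    · exact key g hg
  · intro x y
    change r x y ↔ _
    rw [hr x x.2 y y.2, Fin.forall_fin_two]
    simp only [Matrix.cons_val_zero, Matrix.cons_val_one, f, g, Prod.Lex.toLex_le_toLex]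
    omega

/-- In `P_n` (`n ≥ 2`), the subposets induced on `A ∪ C` and on `C ∪ B` each have
order dimension at most `2`. -/
theorem dim_Pn_halves_le_two {n : ℕ} (hn : 2 ≤ n) :
    subDim (Pnle n)
      (Set.range (Sum.inl : Fin n → PnElt n) ∪
        Set.range (fun c : CIdx n => (Sum.inr (Sum.inl c) : PnElt n))) ≤ 2 ∧
    subDim (Pnle n)
      (Set.range (fun c : CIdx n => (Sum.inr (Sum.inl c) : PnElt n)) ∪
        Set.range (fun j : Fin n => (Sum.inr (Sum.inr j) : PnElt n))) ≤ 2 := by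
  constructor
  · -- The block of `a_i` and `c_{ij}` is `i`; the heights `-1` and `-n` put `a_i` below all
    -- leaves `c_{ij}`, which have heights `j` and `-j`.
    apply subDim_le_two (α := PnElt n) _ _
      (Sum.elim (fun i : Fin n => (i : ℤ)) (Sum.elim (fun c : CIdx n => (c.1.1 : ℤ)) (fun _ => 0)))
      (Sum.elim (fun _ => -1) (Sum.elim (fun c : CIdx n => (c.1.2 : ℤ)) (fun _ => 0)))
      (Sum.elim (fun _ => -n) (Sum.elim (fun c : CIdx n => -(c.1.2 : ℤ)) (fun _ => 0)))
    all_goals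
      rintro _ (⟨i, rfl⟩ | ⟨⟨⟨i, j⟩, hc⟩, rfl⟩) _ (⟨k, rfl⟩ | ⟨⟨⟨k, l⟩, hd⟩, rfl⟩) <;>
      simp [Pnle, Fin.ext_iff] <;> omega
  · -- The block of `b_j` and `c_{ij}` is `j`; the heights `n` and `1` put `b_j` above all
    -- leaves `c_{ij}`, which have heights `i` and `-i`.
    apply subDim_le_two (α := PnElt n) _ _
      (Sum.elim (fun _ => 0) (Sum.elim (fun c : CIdx n => (c.1.2 : ℤ)) (fun j : Fin n => (j : ℤ))))
      (Sum.elim (fun _ => 0) (Sum.elim (fun c : CIdx n => (c.1.1 : ℤ)) (fun _ => n)))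
      (Sum.elim (fun _ => 0) (Sum.elim (fun c : CIdx n => -(c.1.1 : ℤ)) (fun _ => 1)))
    all_goals
      rintro _ (⟨⟨⟨i, j⟩, hc⟩, rfl⟩ | ⟨i, rfl⟩) _ (⟨⟨⟨k, l⟩, hd⟩, rfl⟩ | ⟨k, rfl⟩) <;>
      simp [Pnle, Fin.ext_iff] <;> omega
end

section
/- Let m ≥ 2, let P = (X₁,…,X_m;≤) be an m-partite poset, let i₁ < j₁ < i₂ < j₂ < ⋯ < i_ℓ < j_ℓ be indices from [m], and for each k ∈ [ℓ] let L_k be a linear order on X_{i_k} ∪ X_{j_k} extending the induced order P_{i_k,j_k}. Then there exists a linear order L on X₁ ∪ ⋯ ∪ X_m extending ≤ whose restriction to X_{i_k} ∪ X_{j_k} equals L_k for every k, and in which every element of X_{i_k} ∪ X_{j_k} precedes every element of X_{i_{k+1}} ∪ X_{j_{k+1}} for every k < ℓ. -/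
/-- If `M` is a transitive antisymmetric relation on a subset `S` of a poset and `M` extends the
induced order on `S`, then some linear order on the whole poset extends both. -/
theorem exists_linear_extension_of_subset_s14 {α : Type*} (r M : α → α → Prop) (S : Set α)
    (hr : IsPartialOrder α r) (hS : ∀ x y, M x y → x ∈ S ∧ y ∈ S)
    (htrans : ∀ x y z, M x y → M y z → M x z) (hanti : ∀ x y, M x y → M y x → x = y)
    (hext : ∀ x ∈ S, ∀ y ∈ S, r x y → M x y) :
    ∃ Lt : α → α → Prop, IsLinearOrder α Lt ∧ (∀ x y, r x y → Lt x y) ∧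
      ∀ x y, M x y → Lt x y := by
  have rrefl : ∀ a, r a a := hr.refl
  have rtrans : ∀ a b c, r a b → r b c → r a c := hr.trans
  have ranti : ∀ a b, r a b → r b a → a = b := hr.antisymm
  let Q : α → α → Prop := fun a b => r a b ∨ ∃ x y, r a x ∧ M x y ∧ r y b
  have hQ : IsPartialOrder α Q :=
    { refl := fun a => Or.inl (rrefl a)
      trans := by
        rintro a b c (h | ⟨x, y, hax, hxy, hyb⟩) (h' | ⟨x', y', hbx', hxy', hyc'⟩)
        · exact Or.inl (rtrans _ _ _ h h')
        · exact Or.inr ⟨x', y', rtrans _ _ _ h hbx', hxy', hyc'⟩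
        · exact Or.inr ⟨x, y, hax, hxy, rtrans _ _ _ hyb h'⟩
        · have hyx' : M y x' :=
            hext _ (hS _ _ hxy).2 _ (hS _ _ hxy').1 (rtrans _ _ _ hyb hbx')
          exact Or.inr ⟨x, y', hax, htrans _ _ _ (htrans _ _ _ hxy hyx') hxy', hyc'⟩
      antisymm := by
        -- An `M`-step on a cycle closes up to an `M`-cycle inside `S`, so its ends coincide and
        -- it is an `r`-step as well.
        have key : ∀ a b x y, r a x → M x y → r y b → r b a → r a b := by
          intro a b x y hax hxy hyb hba
          have hyx : M y x := hext _ (hS _ _ hxy).2 _ (hS _ _ hxy).1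
            (rtrans _ _ _ hyb (rtrans _ _ _ hba hax))
          obtain rfl := hanti _ _ hxy hyx
          exact rtrans _ _ _ hax hyb
        rintro a b (h | ⟨x, y, hax, hxy, hyb⟩) (h' | ⟨x', y', hbx', hxy', hya'⟩)
        · exact ranti _ _ h h'
        · exact ranti _ _ h (key _ _ _ _ hbx' hxy' hya' h)
        · exact ranti _ _ (key _ _ _ _ hax hxy hyb h') h'
        · have hyx' : M y x' :=
            hext _ (hS _ _ hxy).2 _ (hS _ _ hxy').1 (rtrans _ _ _ hyb hbx')
          have hyx : M y' x :=
            hext _ (hS _ _ hxy').2 _ (hS _ _ hxy).1 (rtrans _ _ _ hya' hax)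
          obtain rfl := hanti _ _ hxy (htrans _ _ _ hyx' (htrans _ _ _ hxy' hyx))
          obtain rfl := hanti _ _ hxy' (htrans _ _ _ hyx hyx')
          exact ranti _ _ (rtrans _ _ _ hax hyb) (rtrans _ _ _ hbx' hya') }
  obtain ⟨Lt, hlin, hle⟩ := extend_partialOrder Q
  exact ⟨Lt, hlin, fun x y h => hle _ _ (Or.inl h),
    fun x y h => hle _ _ (Or.inr ⟨x, y, rrefl x, h, rrefl y⟩)⟩

/-- Given indices `i₁ < j₁ < i₂ < j₂ < ⋯ < i_ℓ < j_ℓ` from `[m]` (encoded by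
`e : Fin ℓ → Fin m × Fin m`) and, for each `k`, a linear order `L k` on
`X_{i_k} ∪ X_{j_k}` extending the induced order, there is a linear extension of the whole
`m`-partite poset restricting to each `L k` and placing every element of
`X_{i_k} ∪ X_{j_k}` before every element of `X_{i_{k+1}} ∪ X_{j_{k+1}}`. -/
theorem stacked_linear_extension {α : Type*} [Fintype α] (r : α → α → Prop)
    (hr : IsPartialOrder α r) {m : ℕ} (hm : 2 ≤ m) (X : Fin m → Set α)
    (hX : IsMPartite r m X) {ℓ : ℕ} (e : Fin ℓ → Fin m × Fin m)
    (he1 : ∀ k, (e k).1 < (e k).2)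
    (he2 : ∀ k k' : Fin ℓ, k < k' → (e k).2 < (e k').1)
    (L : ∀ k : Fin ℓ, ↥(X (e k).1 ∪ X (e k).2) → ↥(X (e k).1 ∪ X (e k).2) → Prop)
    (hLlin : ∀ k, IsLinearOrder ↥(X (e k).1 ∪ X (e k).2) (L k))
    (hLext : ∀ k, ∀ a b : ↥(X (e k).1 ∪ X (e k).2), r (a : α) (b : α) → L k a b) :
    ∃ Lt : α → α → Prop, IsLinearOrder α Lt ∧ (∀ x y, r x y → Lt x y) ∧
      (∀ k, ∀ a b : ↥(X (e k).1 ∪ X (e k).2), Lt (a : α) (b : α) ↔ L k a b) ∧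
      (∀ k k' : Fin ℓ, k < k' → ∀ a : ↥(X (e k).1 ∪ X (e k).2),
        ∀ b : ↥(X (e k').1 ∪ X (e k').2), Lt (a : α) (b : α)) := by
  have layer : ∀ {a : α} {i j : Fin m}, a ∈ X i → a ∈ X j → i = j := by
    intro a i j hi hj
    by_contra h
    exact Set.disjoint_left.1 (hX.disjoint i j h) hi hj
  have layer_le : ∀ {a b : α} {i j : Fin m}, a ∈ X i → b ∈ X j → r a b → i ≤ j := by
    intro a b i j hi hj hab
    by_cases h : a = b
    · subst h
      exact (layer hi hj).le
    · obtain ⟨i', j', hlt, ha, hb⟩ := hX.strict a b hab h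
      rw [layer hi ha, layer hj hb]
      exact hlt.le
  have not_back : ∀ {a b : α} {k k' : Fin ℓ}, a ∈ X (e k).1 ∪ X (e k).2 →
      b ∈ X (e k').1 ∪ X (e k').2 → k' < k → ¬ r a b := by
    intro a b k k' ha hb hlt hab
    have h1 := he1 k
    have h2 := he1 k'
    have h3 := he2 k' k hlt
    rcases ha with ha | ha <;> rcases hb with hb | hb <;>
    · have h4 := layer_le ha hb hab
      omega
  have block : ∀ {a : α} {k k' : Fin ℓ}, a ∈ X (e k).1 ∪ X (e k).2 →
      a ∈ X (e k').1 ∪ X (e k').2 → k = k' := by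
    intro a k k' ha ha'
    rcases lt_trichotomy k k' with h | h | h
    · exact (not_back ha' ha h (hr.refl a)).elim
    · exact h
    · exact (not_back ha ha' h (hr.refl a)).elim
  let M : α → α → Prop := fun a b =>
    (∃ (k : Fin ℓ) (ha : a ∈ X (e k).1 ∪ X (e k).2) (hb : b ∈ X (e k).1 ∪ X (e k).2),
      L k ⟨a, ha⟩ ⟨b, hb⟩) ∨
    ∃ k k' : Fin ℓ, k < k' ∧ a ∈ X (e k).1 ∪ X (e k).2 ∧ b ∈ X (e k').1 ∪ X (e k').2
  obtain ⟨Lt, hlin, hLr, hLM⟩ := exists_linear_extension_of_subset_s14 r M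
    {a | ∃ k, a ∈ X (e k).1 ∪ X (e k).2} hr
    (by
      rintro x y (⟨k, hx, hy, -⟩ | ⟨k, k', -, hx, hy⟩)
      · exact ⟨⟨k, hx⟩, ⟨k, hy⟩⟩
      · exact ⟨⟨k, hx⟩, ⟨k', hy⟩⟩)
    (by
      rintro x y z (⟨k, hx, hy, h⟩ | ⟨k, k', h, hx, hy⟩) (⟨l, hy', hz, h'⟩ | ⟨l, l', h', hy', hz⟩)
      · obtain rfl := block hy hy'
        exact Or.inl ⟨k, hx, hz, (hLlin k).trans _ _ _ h h'⟩
      · obtain rfl := block hy hy'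
        exact Or.inr ⟨k, l', h', hx, hz⟩
      · obtain rfl := block hy hy'
        exact Or.inr ⟨k, k', h, hx, hz⟩
      · obtain rfl := block hy hy'
        exact Or.inr ⟨k, l', h.trans h', hx, hz⟩)
    (by
      rintro x y (⟨k, hx, hy, h⟩ | ⟨k, k', h, hx, hy⟩) (⟨l, hy', hx', h'⟩ | ⟨l, l', h', hy', hx'⟩)
      · obtain rfl := block hy hy'
        exact congrArg Subtype.val ((hLlin k).antisymm _ _ h h')
      · obtain rfl := block hy hy'
        obtain rfl := block hx hx'
        exact (lt_irrefl _ h').elim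
      · obtain rfl := block hy hy'
        obtain rfl := block hx hx'
        exact (lt_irrefl _ h).elim
      · obtain rfl := block hy hy'
        obtain rfl := block hx hx'
        exact (lt_asymm h h').elim)
    (by
      rintro x ⟨k, hx⟩ y ⟨k', hy⟩ hxy
      rcases lt_trichotomy k k' with h | h | h
      · exact Or.inr ⟨k, k', h, hx, hy⟩
      · subst h
        exact Or.inl ⟨k, hx, hy, hLext k _ _ hxy⟩
      · exact (not_back hx hy h hxy).elim)
  refine ⟨Lt, hlin, hLr, fun k a b => ⟨fun h => ?_, fun h => ?_⟩, fun k k' hk a b => ?_⟩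
  · rcases (hLlin k).total a b with hab | hba
    · exact hab
    · have hba' : Lt b a := hLM _ _ (Or.inl ⟨k, b.2, a.2, hba⟩)
      obtain rfl : a = b := Subtype.ext (hlin.antisymm _ _ h hba')
      exact hba
  · exact hLM _ _ (Or.inl ⟨k, a.2, b.2, h⟩)
  · exact hLM _ _ (Or.inr ⟨k, k', hk, a.2, b.2⟩)
end

section
/- Let m ≥ 2 and let P = (X₁,…,X_m;≤) be an m-partite poset. Suppose for each pair i < j we are given a finite family 𝓛*_{i,j} of linear orders on X₁ ∪ ⋯ ∪ X_m, each extending ≤, such that the family of restrictions of the members of 𝓛*_{i,j} to Xᵢ ∪ X_j realizes the induced order P_{i,j}. Then the union 𝓡 = ⋃_{i<j} 𝓛*_{i,j} realizes P, i.e., for all x,y: x ≤ y iff x ≤_L y for every L ∈ 𝓡. -/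
/-- Any two points lie in the union of two distinct parts. When both lie in the same part,
a second part is still available because `2 ≤ m`. -/
theorem IsMPartite.exists_pair {α : Type*} {r : α → α → Prop} {m : ℕ} {X : Fin m → Set α}
    (hX : IsMPartite r m X) (hm : 2 ≤ m) (x y : α) :
    ∃ p : Fin m × Fin m, p.1 < p.2 ∧ x ∈ X p.1 ∪ X p.2 ∧ y ∈ X p.1 ∪ X p.2 := by
  obtain ⟨i, hi⟩ := hX.cover x
  obtain ⟨j, hj⟩ := hX.cover y
  have : Nontrivial (Fin m) := Fin.nontrivial_iff_two_le.mpr hm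
  rcases lt_trichotomy i j with h | rfl | h
  · exact ⟨(i, j), h, Or.inl hi, Or.inr hj⟩
  · obtain ⟨k, hk⟩ := exists_ne i
    rcases lt_or_gt_of_ne hk with h | h
    · exact ⟨(k, i), h, Or.inr hi, Or.inr hj⟩
    · exact ⟨(i, k), h, Or.inl hi, Or.inl hj⟩
  · exact ⟨(j, i), h, Or.inr hi, Or.inl hj⟩

/-- If for every pair `i < j` we have a finite family `L p` of linear extensions of the
`m`-partite order `r` whose restrictions to `Xᵢ ∪ X_j` realize the induced order
`P_{i,j}`, then the union of all these families realizes `r`. -/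
theorem union_of_families_realizes {α : Type*} [Fintype α] (r : α → α → Prop)
    (hr : IsPartialOrder α r) {m : ℕ} (hm : 2 ≤ m) (X : Fin m → Set α)
    (hX : IsMPartite r m X)
    (n : Fin m × Fin m → ℕ) (L : ∀ p : Fin m × Fin m, Fin (n p) → α → α → Prop)
    (hlin : ∀ p : Fin m × Fin m, p.1 < p.2 → ∀ t, IsLinearOrder α (L p t))
    (hext : ∀ p : Fin m × Fin m, p.1 < p.2 → ∀ t, ∀ x y, r x y → L p t x y)
    (hreal : ∀ p : Fin m × Fin m, p.1 < p.2 → ∀ a b : ↥(X p.1 ∪ X p.2),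
      r (a : α) (b : α) ↔ ∀ t, L p t (a : α) (b : α)) :
    ∀ x y, r x y ↔ ∀ p : Fin m × Fin m, p.1 < p.2 → ∀ t, L p t x y := by
  intro x y
  refine ⟨fun h p hp t => hext p hp t x y h, fun h => ?_⟩
  obtain ⟨p, hp, hx, hy⟩ := hX.exists_pair hm x y
  exact (hreal p hp ⟨x, hx⟩ ⟨y, hy⟩).mpr (h p hp)
end

section
/- Let m ≥ 2 and consider the canonical interval order on the set of 2-element subsets of [m], in which {i₁,j₁} < {i₂,j₂} (where i₁<j₁ and i₂<j₂) iff j₁ < i₂. Then the set of 2-element subsets {i,j} with i < j, i ≤ ⌈m/2⌉ and j ≥ ⌈m/2⌉ is an antichain of cardinality ⌊(m−1)(m+3)/4⌋ in this order. -/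
/-!
Write `c = ⌈m/2⌉`, which is `(m + 1) / 2` in natural-number division. Every middle pair straddles
`c`: its smaller element is at most `c` and its larger one at least `c`. So for any two middle
pairs, the larger element of each is at least the smaller element of the other, and they are
incomparable. The middle pairs fill the whole rectangle `[1, c] × [c, m]` except for the single
diagonal point `(c, c)` (`middlePairs_eq_erase`), so there are `c * (m + 1 - c) - 1` of them;
splitting on the parity of `m` turns this into the closed form.
-/

/-- The 2-element subsets `{i,j}` (written as pairs `i < j` from `[m] = {1,…,m}`) with
`i ≤ ⌈m/2⌉ ≤ j`. -/
def middlePairs (m : ℕ) : Finset (ℕ × ℕ) :=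
  (Finset.Icc 1 m ×ˢ Finset.Icc 1 m).filter
    (fun p => p.1 < p.2 ∧ p.1 ≤ (m + 1) / 2 ∧ (m + 1) / 2 ≤ p.2)

/-- On the rectangle `[1, c] × [c, m]` the condition `i < j` fails only at the corner `(c, c)`. -/
theorem middlePairs_eq_erase (m : ℕ) :
    middlePairs m =
      (Finset.Icc 1 ((m + 1) / 2) ×ˢ Finset.Icc ((m + 1) / 2) m).erase
        ((m + 1) / 2, (m + 1) / 2) := by
  ext ⟨i, j⟩
  simp only [middlePairs, Finset.mem_filter, Finset.mem_product, Finset.mem_Icc,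
    Finset.mem_erase, ne_eq, Prod.mk.injEq]
  omega

theorem card_middlePairs {m : ℕ} (hm : 2 ≤ m) :
    (middlePairs m).card = (m + 1) / 2 * (m + 1 - (m + 1) / 2) - 1 := by
  rw [middlePairs_eq_erase m, Finset.card_erase_of_mem, Finset.card_product, Nat.card_Icc,
    Nat.card_Icc, Nat.add_sub_cancel]
  simp only [Finset.mem_product, Finset.mem_Icc]
  omega

/-- In the canonical interval order on 2-subsets of `[m]` — where `{i₁,j₁} < {i₂,j₂}`
(with `i₁<j₁`, `i₂<j₂`) iff `j₁ < i₂` — the 2-sets `{i,j}` with `i ≤ ⌈m/2⌉ ≤ j` form an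
antichain of cardinality `⌊(m-1)(m+3)/4⌋`. -/
theorem middlePairs_antichain_card {m : ℕ} (hm : 2 ≤ m) :
    (∀ p ∈ middlePairs m, ∀ q ∈ middlePairs m, p ≠ q →
      ¬ p.2 < q.1 ∧ ¬ q.2 < p.1) ∧
    (middlePairs m).card = (m - 1) * (m + 3) / 4 := by
  refine ⟨fun p hp q hq _ => ?_, ?_⟩
  · simp only [middlePairs, Finset.mem_filter] at hp hq
    omega
  · rw [card_middlePairs hm]
    rcases Nat.even_or_odd' m with ⟨k, rfl | rfl⟩
    · -- With `k = n + 1`, both sides equal `n ^ 2 + 3 * n + 1`; the product on the right leaves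
      -- remainder `1` modulo `4`.
      obtain ⟨n, rfl⟩ : ∃ n, k = n + 1 := ⟨k - 1, by omega⟩
      have h₁ : (2 * (n + 1) + 1) / 2 = n + 1 := by omega
      have h₂ : 2 * (n + 1) + 1 - (n + 1) = n + 2 := by omega
      have h₃ : 2 * (n + 1) - 1 = 2 * n + 1 := by omega
      rw [h₁, h₂, h₃]
      ring_nf
      omega
    · have h₁ : (2 * k + 1 + 1) / 2 = k + 1 := by omega
      have h₂ : 2 * k + 1 + 1 - (k + 1) = k + 1 := by omega
      rw [h₁, h₂, Nat.add_sub_cancel]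
      ring_nf
      omega
end

section
/- Let (X,≤) be a finite poset and d ≥ 1 a natural number. Then there exist d linear orders on X, each extending ≤, that realize ≤ if and only if there exists an injective map φ : X → ℝ^d such that for all x,y ∈ X: x ≤ y iff φ(x)ᵢ ≤ φ(y)ᵢ for every coordinate i ∈ {1,…,d}. -/
/-!
From a realizer, an embedding arises by taking as `i`-th coordinate of `x` its rank in the
`i`-th linear order, i.e. the number of elements below it; in a finite linear order, comparing
ranks is the same as comparing elements.

Conversely, the `i`-th coordinate of an embedding only linearly preorders `X`, as distinct points
may share a coordinate. Breaking ties by one fixed linear extension of the partial order makes each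
coordinate order linear while keeping it an extension of the partial order; comparability in all
of these orders still forces comparability of all coordinates.
-/

/-- In a finite linear order, elements compare as the sizes of their down-sets do. -/
lemma card_downset_le_iff {X : Type*} [Finite X] (r : X → X → Prop) [IsLinearOrder X r]
    (x y : X) : {z | r z x}.ncard ≤ {z | r z y}.ncard ↔ r x y := by
  constructor
  · intro h
    by_contra hxy
    have hyx : r y x := (total_of r x y).resolve_left hxy
    -- The down-set of `y` misses `x`, hence is strictly smaller than that of `x`.
    have hlt : {z | r z y}.ncard < {z | r z x}.ncard :=
      Set.ncard_lt_ncard ⟨fun z hz => trans_of r hz hyx, fun hs => hxy (hs (refl_of r x))⟩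
        (Set.toFinite _)
    omega
  · intro h
    exact Set.ncard_le_ncard (fun z hz => trans_of r hz h) (Set.toFinite _)

/-- The order induced along an injection into a linear order is linear. -/
lemma isLinearOrder_of_injective {X Y : Type*} [LinearOrder Y] {f : X → Y}
    (hf : Function.Injective f) : IsLinearOrder X (fun x y => f x ≤ f y) where
  refl _ := le_rfl
  trans _ _ _ h₁ h₂ := le_trans h₁ h₂
  antisymm _ _ h₁ h₂ := hf (le_antisymm h₁ h₂)
  total _ _ := le_total _ _

/-- A finite poset admits a realizer of size `d ≥ 1` iff it embeds order-faithfully into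
`ℝ^d` with the componentwise order. -/
theorem realizer_iff_embedding_real {X : Type*} [Fintype X] [PartialOrder X]
    {d : ℕ} (hd : 1 ≤ d) :
    (∃ L : Fin d → X → X → Prop, Realizes (fun x y : X => x ≤ y) L) ↔
      ∃ φ : X → (Fin d → ℝ), Function.Injective φ ∧
        ∀ x y : X, x ≤ y ↔ ∀ i, φ x i ≤ φ y i := by
  constructor
  · rintro ⟨L, hlin, hL⟩
    have key : ∀ x y : X, x ≤ y ↔
        ∀ i, ({z | L i z x}.ncard : ℝ) ≤ ({z | L i z y}.ncard : ℝ) := by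
      intro x y
      refine (hL x y).trans (forall_congr' fun i => ?_)
      have := hlin i
      rw [Nat.cast_le, card_downset_le_iff (L i)]
    refine ⟨fun x i => ({z | L i z x}.ncard : ℝ), fun x y hxy => ?_, key⟩
    exact le_antisymm ((key x y).2 fun i => (congrFun hxy i).le)
      ((key y x).2 fun i => (congrFun hxy i).ge)
  · rintro ⟨φ, -, hφ⟩
    let f : Fin d → X → ℝ ×ₗ LinearExtension X := fun i x => toLex (φ x i, toLinearExtension x)
    refine ⟨fun i x y => f i x ≤ f i y, fun i => isLinearOrder_of_injective fun x y hxy => ?_,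
      fun x y => ⟨fun hxy i => ?_, fun h => (hφ x y).2 fun i => ?_⟩⟩
    · -- `LinearExtension X` is a copy of `X`, so the second component recovers the point.
      exact congrArg (fun p => (ofLex p).2) hxy
    · exact Prod.Lex.toLex_mono ⟨(hφ x y).1 hxy i, toLinearExtension.monotone hxy⟩
    · exact Prod.Lex.monotone_fst _ _ (h i)
end

section
/- For every n ≥ 2, the standard example S_n has order dimension exactly n. -/
/-- The order of the standard example `S_n`, on `{a₁,…,a_n}` (left summands) and
`{b₁,…,b_n}` (right summands): the only strict relations are `a_i < b_j` for `i ≠ j`. -/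
def standardExample (n : ℕ) : (Fin n ⊕ Fin n) → (Fin n ⊕ Fin n) → Prop
  | Sum.inl i, Sum.inl i' => i = i'
  | Sum.inl i, Sum.inr j => i ≠ j
  | Sum.inr _, Sum.inl _ => False
  | Sum.inr j, Sum.inr j' => j = j'

/-- The position of an element in the `i`-th linear order of the optimal realizer of `S_n`:
first the `a_k` with `k ≠ i`, then `b_i`, then `a_i`, then the `b_k` with `k ≠ i`.
Positions need not be consecutive. -/
def rank {n : ℕ} (i : Fin n) : Fin n ⊕ Fin n → ℕ
  | Sum.inl k => if k = i then n + 1 else k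
  | Sum.inr k => if k = i then n else n + 2 + k

lemma rank_injective {n : ℕ} (i : Fin n) : Function.Injective (rank i) := by
  rintro (x | x) (y | y) h <;> simp only [rank] at h <;> split_ifs at h <;>
    first | omega | (congr 1; omega)

lemma isLinearOrder_rank {n : ℕ} (i : Fin n) :
    IsLinearOrder (Fin n ⊕ Fin n) (fun x y => rank i x ≤ rank i y) where
  refl _ := le_rfl
  trans _ _ _ := le_trans
  antisymm _ _ h h' := rank_injective i (le_antisymm h h')
  total _ _ := le_total _ _

lemma realizes_rank {n : ℕ} (hn : 2 ≤ n) :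
    Realizes (standardExample n) (fun i x y => rank i x ≤ rank i y) := by
  refine ⟨isLinearOrder_rank, ?_⟩
  rintro (x | x) (y | y) <;> simp only [standardExample, rank]
  · refine ⟨fun h i => by rw [h], fun h => ?_⟩
    have := h x
    split_ifs at this <;> omega
  · refine ⟨fun h i => by split_ifs <;> omega, fun h e => ?_⟩
    have := h x
    split_ifs at this <;> omega
  · refine ⟨False.elim, fun h => ?_⟩
    -- The order of index `x` puts `b_x` above every `a_y` with `y ≠ x`; for `y = x` any other
    -- index works, and one exists because `n ≥ 2`.
    have : Nontrivial (Fin n) := Fin.nontrivial_iff_two_le.mpr hn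
    obtain ⟨z, hz⟩ := exists_ne x
    have h₁ := h x
    have h₂ := h z
    split_ifs at h₁ h₂ <;> omega
  · refine ⟨fun h i => by rw [h], fun h => ?_⟩
    have := h y
    split_ifs at this <;> omega

lemma le_of_realizes {n d : ℕ} {L : Fin d → Fin n ⊕ Fin n → Fin n ⊕ Fin n → Prop}
    (hL : Realizes (standardExample n) L) : n ≤ d := by
  obtain ⟨hlin, hr⟩ := hL
  have hex (i : Fin n) : ∃ c, ¬ L c (Sum.inl i) (Sum.inr i) := by
    by_contra! h
    exact (hr _ _).mpr h rfl
  choose c hc using hex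
  have hinj : Function.Injective c := by
    intro i j hij
    by_contra hne
    have := hlin (c i)
    have hba : L (c i) (Sum.inr j) (Sum.inl j) :=
      (total_of (L (c i)) _ _).resolve_left (hij ▸ hc j)
    have hab : L (c i) (Sum.inl i) (Sum.inr j) := (hr (Sum.inl i) (Sum.inr j)).mp hne (c i)
    have hab' : L (c i) (Sum.inl j) (Sum.inr i) :=
      (hr (Sum.inl j) (Sum.inr i)).mp (Ne.symm hne) (c i)
    exact hc i (trans_of (L (c i)) hab (trans_of (L (c i)) hba hab'))
  simpa using Fintype.card_le_of_injective c hinj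

/-- For every `n ≥ 2`, the standard example `S_n` has order dimension exactly `n`. -/
theorem dim_standardExample {n : ℕ} (hn : 2 ≤ n) :
    relDim (standardExample n) = n := by
  refine le_antisymm (Nat.sInf_le ⟨_, realizes_rank hn⟩) ?_
  refine le_csInf ⟨n, _, realizes_rank hn⟩ ?_
  rintro d ⟨L, hL⟩
  exact le_of_realizes hL
end
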